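/- Let L be a prefix-closed language over an alphabet Σ with ∅ ≠ L and L ≠ Σ*. Then (Lᶜ)* = Lᶜ ∪ {ε} and ((Lᶜ)*)ᶜ = L \ {ε}; furthermore, the eight-element family S = {L, Lᶜ, Lᶜ ∪ {ε}, L \ {ε}, L*, (L*)ᶜ, (L*)ᶜ ∪ {ε}, L* \ {ε}} is closed under complement and under Kleene star, so repeated application of Kleene closure and complement to L produces at most eight distinct languages. -/

import Mathlib

/-!
The complement of a prefix-closed language `P` is a right ideal: extending a word outside `P` keeps
it outside `P`. Hence `Pᶜ` is closed under concatenation and its star only adds the empty word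
(`lstar_compl`). The star of a prefix-closed language is again prefix-closed
(`IsPrefixClosed.lstar`), so the same holds for the complement of `lstar L`. Since star is
idempotent and insensitive to the empty word (`lstar_lstar`, `lstar_sdiff_nil`,
`lstar_union_nil`), the star of each of the eight languages is `lstar L`, `Lᶜ ∪ {[]}` or
`(lstar L)ᶜ ∪ {[]}`, and complementation permutes the eight languages.
-/

open List

/-- Left quotient of a language by a word: `L_w = {x | w ++ x ∈ L}`. -/
def leftQuot {α : Type*} (L : Set (List α)) (w : List α) : Set (List α) :=
  {x | w ++ x ∈ L}

/-- The set of all left quotients of `L`. -/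
def quotients {α : Type*} (L : Set (List α)) : Set (Set (List α)) :=
  Set.range (leftQuot L)

/-- A language is prefix-closed if it contains all prefixes of its words. -/
def IsPrefixClosed {α : Type*} (L : Set (List α)) : Prop :=
  ∀ w ∈ L, ∀ u, u <+: w → u ∈ L

/-- Product (concatenation) of two languages. -/
def lprod {α : Type*} (K L : Set (List α)) : Set (List α) :=
  {w | ∃ u ∈ K, ∃ v ∈ L, w = u ++ v}

/-- `i`-th power of a language. -/
def lpow {α : Type*} (L : Set (List α)) : ℕ → Set (List α)
  | 0 => {[]}
  | n + 1 => lprod L (lpow L n)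

/-- Kleene star of a language: union of all powers `L ^ i`, `i ≥ 0`. -/
def lstar {α : Type*} (L : Set (List α)) : Set (List α) :=
  ⋃ i : ℕ, lpow L i

section Star

variable {α : Type*} {K M P : Set (List α)}

theorem nil_mem_lstar (K : Set (List α)) : [] ∈ lstar K :=
  Set.mem_iUnion.2 ⟨0, rfl⟩

theorem append_mem_lstar {u v : List α} (hu : u ∈ K) (hv : v ∈ lstar K) :
    u ++ v ∈ lstar K := by
  obtain ⟨i, hi⟩ := Set.mem_iUnion.1 hv
  exact Set.mem_iUnion.2 ⟨i + 1, u, hu, v, hi, rfl⟩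

theorem subset_lstar (K : Set (List α)) : K ⊆ lstar K := fun u hu => by
  simpa using append_mem_lstar hu (nil_mem_lstar K)

/-- Induction principle for the star: `lstar K` is the least language containing the empty word
and stable under prepending words of `K`. -/
theorem lstar_subset (h0 : [] ∈ M) (h : ∀ u ∈ K, ∀ v ∈ M, u ++ v ∈ M) : lstar K ⊆ M := by
  refine Set.iUnion_subset fun i => ?_
  induction i with
  | zero => exact Set.singleton_subset_iff.2 h0
  | succ n ih =>
    rintro _ ⟨u, hu, v, hv, rfl⟩
    exact h u hu v (ih hv)

theorem lstar_mono_of_subset_insert (h : K ⊆ M ∪ {[]}) : lstar K ⊆ lstar M :=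
  lstar_subset (nil_mem_lstar M) fun u hu v hv => by
    rcases h hu with hu | rfl
    · exact append_mem_lstar hu hv
    · exact hv

theorem lstar_union_nil (K : Set (List α)) : lstar (K ∪ {[]}) = lstar K :=
  (lstar_mono_of_subset_insert subset_rfl).antisymm
    (lstar_mono_of_subset_insert fun _ hu => Or.inl (Or.inl hu))

theorem lstar_sdiff_nil (K : Set (List α)) : lstar (K \ {[]}) = lstar K := by
  rw [← lstar_union_nil, Set.sdiff_union_self, lstar_union_nil]

theorem append_mem_lstar_of_mem_lstar {u v : List α} (hu : u ∈ lstar K) (hv : v ∈ lstar K) :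
    u ++ v ∈ lstar K := by
  have h : lstar K ⊆ {w | w ++ v ∈ lstar K} :=
    lstar_subset hv fun a ha b hb => by
      simpa using append_mem_lstar ha hb
  exact h hu

theorem lstar_lstar (K : Set (List α)) : lstar (lstar K) = lstar K :=
  (lstar_subset (nil_mem_lstar K) fun _ hu _ hv => append_mem_lstar_of_mem_lstar hu hv).antisymm
    (subset_lstar _)

/-- The complement of a prefix-closed language is a right ideal, so its star adds at most the
empty word. -/
theorem lstar_compl (hP : IsPrefixClosed P) : lstar Pᶜ = Pᶜ ∪ {[]} := by
  refine (lstar_subset (Or.inr rfl) fun u hu v _ => ?_).antisymm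
    (Set.union_subset (subset_lstar _) (Set.singleton_subset_iff.2 (nil_mem_lstar _)))
  exact Or.inl fun h => hu (hP _ h u (List.prefix_append u v))

/-- A prefix of a product of words of `P` is a product of words of `P` followed by a prefix of at most one
further word of `P`. -/
theorem IsPrefixClosed.lstar (hP : IsPrefixClosed P) : IsPrefixClosed (lstar P) := by
  have h : _root_.lstar P ⊆ {w | ∀ u, u <+: w → u ∈ _root_.lstar P} := by
    refine lstar_subset (fun u hu => ?_) fun a ha b hb u hu => ?_
    · rw [List.prefix_nil.1 hu]
      exact nil_mem_lstar P
    · rcases List.prefix_or_prefix_of_prefix hu (List.prefix_append a b) with hua | ⟨c, rfl⟩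
      · exact subset_lstar P (hP a ha u hua)
      · exact append_mem_lstar ha (hb c ((List.prefix_append_right_inj a).1 hu))
  exact fun w hw => h hw

theorem compl_sdiff_nil (K : Set (List α)) : (K \ {[]})ᶜ = Kᶜ ∪ {[]} := by
  rw [Set.sdiff_eq, Set.compl_inter, compl_compl]

theorem compl_compl_union_nil (K : Set (List α)) : (Kᶜ ∪ {[]})ᶜ = K \ {[]} := by
  rw [← compl_sdiff_nil, compl_compl]

end Star

theorem prefix_closed_kuratowski_star {α : Type*} (L : Set (List α))
    (hLcl : IsPrefixClosed L) (hne : L ≠ ∅) (hnu : L ≠ Set.univ) :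
    lstar Lᶜ = Lᶜ ∪ {[]} ∧ (lstar Lᶜ)ᶜ = L \ {[]} ∧
      (∀ M ∈ ({L, Lᶜ, Lᶜ ∪ {[]}, L \ {[]}, lstar L, (lstar L)ᶜ,
          (lstar L)ᶜ ∪ {[]}, lstar L \ {[]}} : Set (Set (List α))),
        Mᶜ ∈ ({L, Lᶜ, Lᶜ ∪ {[]}, L \ {[]}, lstar L, (lstar L)ᶜ,
          (lstar L)ᶜ ∪ {[]}, lstar L \ {[]}} : Set (Set (List α))) ∧
          lstar M ∈ ({L, Lᶜ, Lᶜ ∪ {[]}, L \ {[]}, lstar L, (lstar L)ᶜ,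
          (lstar L)ᶜ ∪ {[]}, lstar L \ {[]}} : Set (Set (List α)))) := by
  have hL := lstar_compl hLcl
  have hS := lstar_compl hLcl.lstar
  refine ⟨hL, by rw [hL, compl_compl_union_nil], fun M hM => ?_⟩
  simp only [Set.mem_insert_iff, Set.mem_singleton_iff] at hM
  rcases hM with rfl | rfl | rfl | rfl | rfl | rfl | rfl | rfl <;>
    simp only [compl_compl, compl_sdiff_nil, compl_compl_union_nil, lstar_union_nil,
      lstar_sdiff_nil, lstar_lstar, hL, hS, Set.mem_insert_iff, Set.mem_singleton_iff, true_or,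
      or_true, and_self]
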